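/- If x is an aperiodic sequence over a finite alphabet, then its pattern complexity satisfies p*(n) ≥ 2n for all n ≥ 1. -/

import Mathlib

/-- Number of distinct patterns of `x` along a window `τ`. -/
noncomputable def patternCount {A : Type*} {n : ℕ} (x : ℤ → A) (τ : Fin n → ℤ) : ℕ :=
  Set.ncard {w : Fin n → A | ∃ m : ℤ, ∀ i : Fin n, w i = x (m + τ i)}

/-- Eventually periodic for a two-sided sequence. -/
def EventuallyPeriodicZ {A : Type*} (x : ℤ → A) : Prop :=
  ∃ T : ℤ, 1 ≤ T ∧ ∃ N : ℤ, ∀ m : ℤ, N ≤ m → x (m + T) = x m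

/-!
Fix a window `τ ∋ 0` contained in `[0, L]`, and say that `t` splits a pattern over `τ` if the
pattern has two occurrences in `x` with different letters at offset `t`. Appending `t` to the
window gains one pattern for each split pattern, so it suffices to find `t > L` splitting two of
them. By Birkhoff recurrence there is a forward recurrent `y` all of whose finite parts occur in
`x`. Suppose that each `t > L` splits at most one pattern.

* If some `t > L` split no pattern of `y`, then from an occurrence of a length `t` part of `y` on,
  each letter of `x` would be determined by the `t` preceding ones, making `x` eventually periodic.
  So each `t > L` splits exactly one pattern, and this pattern comes from `y`.
* A pattern not coming from `y` is therefore never split. It occurs only once, since the distance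
  between two occurrences would be an eventual period. Hence far enough to the right all patterns
  of `x` come from `y`.
* By recurrence some `t > L` satisfies `y (i + t) = y i` at a set of positions `i` representing all
  patterns of `y`. Far to the right, `x (m + t) ≠ x m` then forces the pattern at `m` to be the one
  split by `t`, so the letter `x m` is prescribed. Hence `x` changes at most once along each
  residue class modulo `t`, and `x` is eventually periodic.
-/

open Filter Function Set Topology

section Recurrence

attribute [local instance] Ultrafilter.add Ultrafilter.addSemigroup

lemma exists_ultrafilter_le_atTop_forall_eventually_add :
    ∃ U : Ultrafilter ℕ, ↑U ≤ (atTop : Filter ℕ) ∧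
      ∀ p : ℕ → Prop, (∀ᶠ n in U, p n) → ∀ᶠ m in U, ∀ᶠ n in U, p (m + n) := by
  obtain ⟨V, hV⟩ : ∃ V : Ultrafilter ℕ+, V + V = V :=
    exists_idempotent_of_compact_t2_of_continuous_add_left Ultrafilter.continuous_add_left
  have idem (p : ℕ+ → Prop) (hp : ∀ᶠ n in V, p n) : ∀ᶠ m in V, ∀ᶠ n in V, p (m + n) :=
    (Ultrafilter.eventually_add V V p).1 (hV.symm ▸ hp)
  have hcofinite : ↑V ≤ (cofinite : Filter ℕ+) := by
    refine V.le_cofinite_or_eq_pure.resolve_right ?_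
    rintro ⟨a, rfl⟩
    have haa : a + a = a := by simpa using idem (· = a) (by simp)
    exact (PNat.lt_add_right a a).ne' haa
  refine ⟨V.map (↑), ?_, fun p hp => by simpa using idem (fun n => p n) hp⟩
  rw [Ultrafilter.coe_map, ← Nat.cofinite_eq_atTop]
  exact PNat.coe_injective.tendsto_cofinite.mono_left hcofinite

/-- Birkhoff recurrence. The recurrent point is the limit of the orbit along an idempotent
ultrafilter. -/
theorem exists_mem_closure_orbit_mapClusterPt_iterate {X : Type*} [TopologicalSpace X]
    [CompactSpace X] [RegularSpace X] {f : X → X} (hf : Continuous f) (x : X) :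
    ∃ y ∈ closure (range fun n : ℕ => f^[n] x), MapClusterPt y atTop fun n : ℕ => f^[n] y := by
  obtain ⟨U, hU, idem⟩ := exists_ultrafilter_le_atTop_forall_eventually_add
  obtain ⟨y, -, hy⟩ := isCompact_univ.ultrafilter_le_nhds (U.map fun n => f^[n] x) (by simp)
  have hlim : Tendsto (fun n => f^[n] x) U (𝓝 y) := hy
  refine ⟨y, mem_closure_of_tendsto hlim (.of_forall fun n => mem_range_self n), ?_⟩
  refine MapClusterPt.mono (F := U) ?_ hU
  refine ((closed_nhds_basis y).mapClusterPt_iff_frequently).2 fun s ⟨hsy, hs⟩ => ?_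
  have hreturn : ∀ᶠ m in U, f^[m] y ∈ s := by
    filter_upwards [idem (fun n => f^[n] x ∈ s) (hlim hsy)] with m hm
    have hshift : Tendsto (fun n => f^[m + n] x) U (𝓝 (f^[m] y)) := by
      simpa only [iterate_add_apply, comp_def] using ((hf.iterate m).tendsto y).comp hlim
    exact hs.mem_of_tendsto hshift hm
  exact hreturn.frequently

variable {A : Type*}

/-- Every finite part of `y` occurs in `x`, i.e. `y` lies in the closure of the set of translates
of `x` for the product topology. -/
def IsLimitOfTranslates (x y : ℤ → A) : Prop :=
  ∀ s : Finset ℤ, ∃ m : ℤ, ∀ i ∈ s, x (m + i) = y i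

/-- Every finite part of `y` reappears arbitrarily far to the right, i.e. `y` is a recurrent point
of the shift. -/
def IsForwardRecurrent (y : ℤ → A) : Prop :=
  ∀ (s : Finset ℤ) (T : ℤ), ∃ t > T, ∀ i ∈ s, y (i + t) = y i

theorem exists_isLimitOfTranslates_isForwardRecurrent [Finite A] (x : ℤ → A) :
    ∃ y, IsLimitOfTranslates x y ∧ IsForwardRecurrent y := by
  let _ : TopologicalSpace A := ⊥
  have _ : DiscreteTopology A := ⟨rfl⟩
  let shift : (ℤ → A) → ℤ → A := fun z i => z (i + 1)
  have hshift : Continuous shift := by fun_prop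
  have iterate_shift (n : ℕ) (z : ℤ → A) (i : ℤ) : shift^[n] z i = z (i + n) := by
    induction n generalizing z with
    | zero => simp
    | succ n ih => simp only [iterate_succ_apply, ih, shift, Nat.cast_succ, add_assoc]
  have eventually_agree (y : ℤ → A) (s : Finset ℤ) : ∀ᶠ z in 𝓝 y, ∀ i ∈ s, z i = y i :=
    (eventually_all_finset s).2 fun i _ =>
      (continuous_apply i).continuousAt.eventually_mem ((isOpen_discrete {y i}).mem_nhds rfl)
  obtain ⟨y, hxy, hy⟩ := exists_mem_closure_orbit_mapClusterPt_iterate hshift x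
  refine ⟨y, fun s => ?_, fun s T => ?_⟩
  · obtain ⟨_, hm, m, rfl⟩ := mem_closure_iff_nhds.1 hxy _ (eventually_agree y s)
    exact ⟨m, fun i hi => by simpa only [iterate_shift, add_comm] using hm i hi⟩
  · have hfreq := hy.frequently (eventually_agree y s)
    obtain ⟨t, ht, hagree⟩ := frequently_atTop.1 hfreq (T.toNat + 1)
    exact ⟨t, by omega, fun i hi => by simpa only [iterate_shift] using hagree i hi⟩

end Recurrence

section EventuallyPeriodic

variable {A : Type*} {x : ℤ → A}

lemma eventuallyPeriodicZ_of_finite_ne {t M : ℤ} (ht : 0 < t)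
    (h : {m | M ≤ m ∧ x (m + t) ≠ x m}.Finite) : EventuallyPeriodicZ x := by
  obtain ⟨N, hN⟩ := h.bddAbove
  refine ⟨t, ht, max M (N + 1), fun m hm => ?_⟩
  by_contra hne
  have : m ≤ N := hN ⟨by omega, hne⟩
  omega

lemma eventuallyPeriodicZ_of_changing_letter_subsingleton {t M : ℤ} (ht : 0 < t)
    (h : (x '' {m | M ≤ m ∧ x (m + t) ≠ x m}).Subsingleton) : EventuallyPeriodicZ x := by
  set D := {m | M ≤ m ∧ x (m + t) ≠ x m}
  have never_back {m : ℤ} (hm : m ∈ D) (k : ℕ) : x (m + t * (k + 1)) ≠ x m := by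
    induction k with
    | zero => simpa using hm.2
    | succ k ih =>
      have hstay : x (m + t * (k + 1) + t) = x (m + t * (k + 1)) := by
        by_contra hchange
        have hmem : m + t * (k + 1) ∈ D := ⟨by nlinarith [hm.1], hchange⟩
        exact ih (h (mem_image_of_mem x hmem) (mem_image_of_mem x hm))
      rw [Nat.cast_succ, mul_add_one, ← add_assoc, hstay]
      exact ih
  have not_lt_of_mod_eq {m m' : ℤ} (hm : m ∈ D) (hm' : m' ∈ D) (hmod : m % t = m' % t) :
      ¬ m < m' := by
    intro hlt
    obtain ⟨c, hc⟩ := Int.ModEq.dvd hmod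
    have hc₀ : 0 < c := (mul_pos_iff_of_pos_left ht).1 (by omega)
    obtain ⟨k, rfl⟩ : ∃ k : ℕ, c = k + 1 := ⟨(c - 1).toNat, by omega⟩
    obtain rfl : m' = m + t * (k + 1) := by omega
    exact never_back hm k (h (mem_image_of_mem x hm') (mem_image_of_mem x hm))
  have hinj : InjOn (· % t) D := fun m hm m' hm' hmod =>
    le_antisymm (not_lt.1 (not_lt_of_mod_eq hm' hm hmod.symm))
      (not_lt.1 (not_lt_of_mod_eq hm hm' hmod))
  have hmaps : MapsTo (· % t) D (Ico 0 t) := fun m _ =>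
    ⟨Int.emod_nonneg m ht.ne', Int.emod_lt_of_pos m ht⟩
  exact eventuallyPeriodicZ_of_finite_ne ht (Finite.of_injOn hmaps hinj (finite_Ico 0 t))

end EventuallyPeriodic

section Pattern

variable {A ι : Type*} {x y : ℤ → A} {τ : ι → ℤ} {L t : ℤ}

/-- The pattern of `x` seen through the window `τ` placed at position `m`. -/
def pattern (x : ℤ → A) (τ : ι → ℤ) (m : ℤ) : ι → A := fun i => x (m + τ i)

lemma pattern_translate (x : ℤ → A) (τ : ι → ℤ) (a m : ℤ) :
    pattern (fun q => x (a + q)) τ m = pattern x τ (a + m) := by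
  funext i
  simp only [pattern, add_assoc]

lemma apply_eq_of_pattern_eq {i₀ : ι} (hi₀ : τ i₀ = 0) {a b : ℤ}
    (h : pattern x τ a = pattern y τ b) : x a = y b := by
  simpa [pattern, hi₀] using congrFun h i₀

/-- The pattern `w` has two occurrences in `x` followed by different letters at offset `t`, so that
appending `t` to the window `τ` yields at least two patterns extending `w`. -/
def IsSplit (x : ℤ → A) (τ : ι → ℤ) (t : ℤ) (w : ι → A) : Prop :=
  ∃ a b, pattern x τ a = w ∧ pattern x τ b = w ∧ x (a + t) ≠ x (b + t)

lemma IsLimitOfTranslates.exists_pattern_eq [Finite ι] (hxy : IsLimitOfTranslates x y)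
    (τ : ι → ℤ) (t i : ℤ) : ∃ a, pattern x τ a = pattern y τ i ∧ x (a + t) = y (i + t) := by
  classical
  have := Fintype.ofFinite ι
  obtain ⟨m, hm⟩ := hxy (insert (i + t) (Finset.univ.image fun j => i + τ j))
  simp only [Finset.forall_mem_insert, Finset.forall_mem_image, Finset.mem_univ,
    forall_const] at hm
  refine ⟨m + i, funext fun j => ?_, ?_⟩
  · rw [pattern, add_assoc, hm.2, pattern]
  · rw [add_assoc, hm.1]

lemma IsForwardRecurrent.exists_forall_pattern_return [Finite A] [Finite ι]
    (hy : IsForwardRecurrent y) (τ : ι → ℤ) (T : ℤ) :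
    ∃ t > T, ∀ m, ∃ i, pattern y τ i = pattern y τ m ∧ y (i + t) = y i := by
  obtain ⟨s, -, hs⟩ := exists_subset_bijOn univ (pattern y τ)
  lift s to Finset ℤ using hs.finite_iff_finite.2 (toFinite _)
  obtain ⟨t, ht, hreturn⟩ := hy s T
  refine ⟨t, ht, fun m => ?_⟩
  obtain ⟨i, hi, him⟩ := hs.surjOn (mem_image_of_mem _ (mem_univ m))
  exact ⟨i, him, hreturn i hi⟩

lemma eqOn_Ici_of_pattern_determines {u v : ℤ → A} (hτ : ∀ i, τ i ∈ Ico 0 t)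
    (hbase : EqOn u v (Ico 0 t))
    (hstep : ∀ q, 0 ≤ q → pattern u τ q = pattern v τ q → u (q + t) = v (q + t)) :
    EqOn u v (Ici 0) := by
  have hnat (n : ℕ) : u n = v n := by
    induction n using Nat.strong_induction_on with
    | _ n ih =>
      rcases lt_or_ge (n : ℤ) t with hn | hn
      · exact hbase ⟨by omega, hn⟩
      · have hpattern : pattern u τ (n - t) = pattern v τ (n - t) := by
          funext i
          obtain ⟨k, hk⟩ := Int.eq_ofNat_of_zero_le (a := n - t + τ i) (by grind)
          simpa only [pattern, hk] using ih k (by grind)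
        simpa using hstep _ (by omega) hpattern
  intro q hq
  lift q to ℕ using hq
  exact hnat q

lemma eventuallyPeriodicZ_of_pattern_determines [Finite A] {M : ℤ} (hτ : ∀ i, τ i ∈ Ico 0 t)
    (h : ∀ a b, M ≤ a → M ≤ b → pattern x τ a = pattern x τ b → x (a + t) = x (b + t)) :
    EventuallyPeriodicZ x := by
  obtain ⟨a, ha, b, hab, hword⟩ : ∃ a, M ≤ a ∧ ∃ b, a < b ∧
      pattern x ((↑) : Ico 0 t → ℤ) a = pattern x (↑) b := by
    obtain ⟨a, ha, b, -, hab, hword⟩ := (Ici_infinite M).exists_lt_map_eq_of_mapsTo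
      (mapsTo_univ (pattern x ((↑) : Ico 0 t → ℤ)) _) finite_univ
    exact ⟨a, ha, b, hab, hword⟩
  have hagree : EqOn (fun q => x (a + q)) (fun q => x (b + q)) (Ici 0) := by
    refine eqOn_Ici_of_pattern_determines hτ (fun q hq => congrFun hword ⟨q, hq⟩) ?_
    intro q hq hpattern
    rw [pattern_translate, pattern_translate] at hpattern
    simpa only [add_assoc] using h _ _ (by omega) (by omega) hpattern
  refine ⟨b - a, by omega, a, fun m hm => ?_⟩
  have := hagree (x := m - a) (by simpa using hm)
  grind

theorem IsLimitOfTranslates.exists_isSplit_pattern [Finite A] [Finite ι]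
    (hxy : IsLimitOfTranslates x y) (hx : ¬ EventuallyPeriodicZ x) (hτ : ∀ i, τ i ∈ Ico 0 t) :
    ∃ i, IsSplit x τ t (pattern y τ i) := by
  by_contra! hsplit
  have determined {a b i : ℤ} (ha : pattern x τ a = pattern y τ i)
      (hb : pattern x τ b = pattern y τ i) : x (a + t) = x (b + t) := by
    by_contra hne
    exact hsplit i ⟨a, b, ha, hb, hne⟩
  obtain ⟨m, hm⟩ := hxy (Finset.Ico 0 t)
  have hagree : EqOn (fun q => x (m + q)) y (Ici 0) := by
    refine eqOn_Ici_of_pattern_determines hτ (fun q hq => hm q (by simpa using hq)) ?_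
    intro q _ hpattern
    rw [pattern_translate] at hpattern
    obtain ⟨a, ha, hat⟩ := hxy.exists_pattern_eq τ t q
    rw [← hat, ← determined hpattern ha, add_assoc]
  have pattern_eq {a : ℤ} (ha : m ≤ a) : pattern x τ a = pattern y τ (a - m) := by
    funext i
    have := hagree (x := a - m + τ i) (by grind)
    grind [pattern]
  refine hx (eventuallyPeriodicZ_of_pattern_determines (M := m) hτ fun a b ha _ hab => ?_)
  exact determined (pattern_eq ha) (hab ▸ pattern_eq ha)

lemma eventuallyPeriodicZ_of_pattern_eq_of_forall_not_isSplit {a b : ℤ} (hab : a < b)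
    (hpattern : pattern x τ a = pattern x τ b)
    (hsplit : ∀ t > L, ¬ IsSplit x τ t (pattern x τ a)) : EventuallyPeriodicZ x := by
  refine ⟨b - a, by omega, a + L + 1, fun m hm => ?_⟩
  by_contra hne
  refine hsplit (m - a) (by omega) ⟨b, a, hpattern.symm, rfl, ?_⟩
  rwa [add_sub_cancel, show b + (m - a) = m + (b - a) by ring]

lemma finite_setOf_forall_not_isSplit [Finite A] [Finite ι] (hx : ¬ EventuallyPeriodicZ x)
    (τ : ι → ℤ) (L : ℤ) : {m | ∀ t > L, ¬ IsSplit x τ t (pattern x τ m)}.Finite := by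
  refine Finite.of_finite_image (f := pattern x τ) (toFinite _) fun a ha b hb hab => ?_
  by_contra hne
  rcases lt_or_gt_of_ne hne with hlt | hlt
  · exact hx (eventuallyPeriodicZ_of_pattern_eq_of_forall_not_isSplit hlt hab ha)
  · exact hx (eventuallyPeriodicZ_of_pattern_eq_of_forall_not_isSplit hlt hab.symm hb)

lemma eventuallyPeriodicZ_of_isSplit_subsingleton {M : ℤ} {i₀ : ι} (hi₀ : τ i₀ = 0) (ht : 0 < t)
    (hsplit : {w | IsSplit x τ t w}.Subsingleton)
    (hreturn : ∀ m, M ≤ m → ∃ a, pattern x τ a = pattern x τ m ∧ x (a + t) = x a) :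
    EventuallyPeriodicZ x := by
  have isSplit_of_ne {m : ℤ} (hm : M ≤ m) (hne : x (m + t) ≠ x m) :
      IsSplit x τ t (pattern x τ m) := by
    obtain ⟨a, ha, hat⟩ := hreturn m hm
    exact ⟨m, a, rfl, ha, by rwa [hat, apply_eq_of_pattern_eq hi₀ ha]⟩
  refine eventuallyPeriodicZ_of_changing_letter_subsingleton (M := M) ht ?_
  rintro _ ⟨m, ⟨hm, hne⟩, rfl⟩ _ ⟨m', ⟨hm', hne'⟩, rfl⟩
  exact apply_eq_of_pattern_eq hi₀ (hsplit (isSplit_of_ne hm hne) (isSplit_of_ne hm' hne'))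

theorem exists_gt_isSplit_nontrivial [Finite A] [Finite ι] (hx : ¬ EventuallyPeriodicZ x)
    {i₀ : ι} (hi₀ : τ i₀ = 0) (hτ : ∀ i, τ i ∈ Icc 0 L) :
    ∃ t > L, {w | IsSplit x τ t w}.Nontrivial := by
  by_contra! hsplit
  obtain ⟨y, hxy, hy⟩ := exists_isLimitOfTranslates_isForwardRecurrent x
  have hfinite : {m | pattern x τ m ∉ range (pattern y τ)}.Finite := by
    refine (finite_setOf_forall_not_isSplit hx τ L).subset fun m hm t ht hmt => hm ?_
    obtain ⟨i, hi⟩ := hxy.exists_isSplit_pattern hx fun i => ⟨(hτ i).1, (hτ i).2.trans_lt ht⟩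
    exact ⟨i, hsplit t ht hi hmt⟩
  obtain ⟨M, hM⟩ := hfinite.bddAbove
  obtain ⟨t, ht, hreturn⟩ := hy.exists_forall_pattern_return τ L
  have ht₀ : 0 < t := ((hτ i₀).1.trans (hτ i₀).2).trans_lt ht
  refine hx (eventuallyPeriodicZ_of_isSplit_subsingleton (M := M + 1) hi₀ ht₀ (hsplit t ht) ?_)
  intro m hm
  obtain ⟨j, hj⟩ : pattern x τ m ∈ range (pattern y τ) := by
    by_contra hnot
    have : m ≤ M := hM hnot
    omega
  obtain ⟨i, hij, hit⟩ := hreturn j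
  obtain ⟨a, hai, hat⟩ := hxy.exists_pattern_eq τ t i
  exact ⟨a, hai.trans (hij.trans hj), by rw [hat, hit, apply_eq_of_pattern_eq hi₀ hai]⟩

end Pattern

section Counting

lemma ncard_image_add_ncard_le_of_fiber_nontrivial {α β : Type*} {f : α → β} {Q : Set α}
    {S : Set β} (hQ : Q.Finite) (hS : ∀ b ∈ S, (Q ∩ f ⁻¹' {b}).Nontrivial) :
    (f '' Q).ncard + S.ncard ≤ Q.ncard := by
  obtain ⟨R, hRQ, hR⟩ := exists_subset_bijOn Q f
  have hS_sub : S ⊆ f '' (Q \ R) := by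
    intro b hb
    obtain ⟨a, ⟨haQ, rfl⟩, a', ⟨haQ', haa'⟩, hne⟩ := hS b hb
    by_cases ha : a ∈ R
    · exact ⟨a', ⟨haQ', fun ha' => hne (hR.injOn ha ha' haa'.symm)⟩, haa'⟩
    · exact ⟨a, ⟨haQ, ha⟩, rfl⟩
  calc (f '' Q).ncard + S.ncard
      ≤ R.ncard + (Q \ R).ncard := by
        rw [← hR.image_eq, hR.injOn.ncard_image]
        gcongr
        exact (ncard_le_ncard hS_sub (hQ.sdiff.image f)).trans (ncard_image_le hQ.sdiff)
    _ = Q.ncard := by rw [add_comm, ncard_sdiff_add_ncard_of_subset hRQ hQ]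

variable {A : Type*} {n : ℕ}

lemma patternCount_eq_ncard_range_pattern (x : ℤ → A) (τ : Fin n → ℤ) :
    patternCount x τ = (range (pattern x τ)).ncard := by
  simp only [patternCount, range, pattern, funext_iff, eq_comm]

lemma pattern_snoc (x : ℤ → A) (τ : Fin n → ℤ) (t m : ℤ) :
    pattern x (Fin.snoc τ t : Fin (n + 1) → ℤ) m = Fin.snoc (pattern x τ m) (x (m + t)) := by
  ext i
  cases i using Fin.lastCases <;> simp [pattern]

theorem patternCount_add_ncard_isSplit_le [Finite A] (x : ℤ → A) (τ : Fin n → ℤ) (t : ℤ) :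
    patternCount x τ + {w | IsSplit x τ t w}.ncard ≤
      patternCount x (Fin.snoc τ t : Fin (n + 1) → ℤ) := by
  have init_pattern (m : ℤ) :
      Fin.init (pattern x (Fin.snoc τ t : Fin (n + 1) → ℤ) m) = pattern x τ m := by
    rw [pattern_snoc, Fin.init_snoc]
  have himage : Fin.init '' range (pattern x (Fin.snoc τ t : Fin (n + 1) → ℤ)) =
      range (pattern x τ) := by
    rw [← range_comp]
    exact congrArg range (funext init_pattern)
  rw [patternCount_eq_ncard_range_pattern, patternCount_eq_ncard_range_pattern, ← himage]
  refine ncard_image_add_ncard_le_of_fiber_nontrivial (toFinite _) ?_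
  rintro w ⟨a, b, ha, hb, hne⟩
  refine ⟨_, ⟨mem_range_self a, (init_pattern a).trans ha⟩,
    _, ⟨mem_range_self b, (init_pattern b).trans hb⟩, fun hab => hne ?_⟩
  simpa [pattern] using congrFun hab (Fin.last n)

lemma two_le_patternCount_zero [Finite A] {x : ℤ → A} (hx : ¬ EventuallyPeriodicZ x) :
    2 ≤ patternCount x (0 : Fin 1 → ℤ) := by
  obtain ⟨m, hm⟩ : ∃ m, x (m + 1) ≠ x m := by
    by_contra! hconst
    exact hx ⟨1, le_rfl, 0, fun m _ => hconst m⟩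
  rw [patternCount_eq_ncard_range_pattern, Nat.succ_le_iff, one_lt_ncard_iff_nontrivial]
  refine ⟨_, mem_range_self (m + 1), _, mem_range_self m, fun h => hm ?_⟩
  simpa [pattern] using congrFun h 0

theorem exists_gt_patternCount_add_two_le_snoc [Finite A] {x : ℤ → A}
    (hx : ¬ EventuallyPeriodicZ x) {τ : Fin (n + 1) → ℤ} (hτ : StrictMono τ) (h0 : τ 0 = 0) :
    ∃ t > τ (Fin.last n),
      patternCount x τ + 2 ≤ patternCount x (Fin.snoc τ t : Fin (n + 2) → ℤ) := by
  have hbounds (i : Fin (n + 1)) : τ i ∈ Icc 0 (τ (Fin.last n)) :=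
    ⟨h0.ge.trans (hτ.monotone (Fin.zero_le i)), hτ.monotone (Fin.le_last i)⟩
  obtain ⟨t, ht, hsplit⟩ := exists_gt_isSplit_nontrivial hx h0 hbounds
  have htwo : 2 ≤ {w | IsSplit x τ t w}.ncard := one_lt_ncard_iff_nontrivial.2 hsplit
  have hgain := patternCount_add_ncard_isSplit_le x τ t
  exact ⟨t, ht, by omega⟩

lemma strictMono_snoc {α : Type*} [Preorder α] {τ : Fin (n + 1) → α} (hτ : StrictMono τ) {t : α}
    (ht : τ (Fin.last n) < t) : StrictMono (Fin.snoc τ t : Fin (n + 2) → α) := by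
  rw [← Fin.insertNth_last']
  exact Fin.strictMono_insertNth_last hτ t ht

end Counting

/-- For an aperiodic sequence, the pattern complexity is at least `2n`:
for every `n ≥ 1` there is a window `0 = τ 0 < τ 1 < ⋯ < τ (n-1)` realizing
at least `2n` distinct patterns. -/
theorem aperiodic_pattern_complexity {A : Type*} [Fintype A]
    (x : ℤ → A) (hx : ¬ EventuallyPeriodicZ x) :
    ∀ n : ℕ, (hn : 1 ≤ n) →
      ∃ τ : Fin n → ℤ, StrictMono τ ∧ τ ⟨0, hn⟩ = 0 ∧ 2 * n ≤ patternCount x τ := by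
  intro n hn
  induction n, hn using Nat.le_induction with
  | base =>
    exact ⟨0, Subsingleton.strictMono _, rfl, two_le_patternCount_zero hx⟩
  | succ n hn ih =>
    obtain ⟨τ, hτ, h0, hcount⟩ := ih
    obtain ⟨n, rfl⟩ := Nat.exists_eq_add_of_le' hn
    obtain ⟨t, ht, hgain⟩ := exists_gt_patternCount_add_two_le_snoc hx hτ h0
    refine ⟨Fin.snoc τ t, strictMono_snoc hτ ht, ?_, by omega⟩
    exact (Fin.snoc_castSucc (α := fun _ => ℤ) t τ 0).trans h0
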